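/- arXiv:2401.15728 — 3 statements merged into one kernel-verified Lean document; each statement's English description precedes it below -/
import Mathlib

section
/- Fix real numbers t ≤ T₁ < T₂ with Σ_rr(t,T₁) > 0, assume γ(u) > 0 for all u ∈ [T₁,T₂], and let D > 0 and y ∈ ℝ. Then the Gaussian average over η of the first-order 1M SOFR futures value at time T₁ reproduces the 1M SOFR futures price formula: ∫_ℝ ( −log D + ∫_{T₁}^{T₂} ( R⁺(η,T₁,t₁) − R⁻(η,T₁,t₁) + R₁*(t₁) ) dt₁ ) N(η; φ_r(t,T₁)·y, Σ_rr(t,T₁)) dη = −log D + ∫_{T₁}^{T₂} [ (ψ_r(t,t₁)/γ(t₁)) · sinh( γ(t₁)·( φ_r(t,t₁)·y + y*(t₁) ) ) + R₁*(t₁) ] dt₁. -/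
open MeasureTheory Real

/-- Mean reversion factor `φ_r(t,v) = exp(−∫_t^v α)`. -/
noncomputable def phiR (α : ℝ → ℝ) (t v : ℝ) : ℝ := Real.exp (-(∫ u in t..v, α u))

/-- Variance of the short-rate factor `Σ_rr(t,v)`. -/
noncomputable def Srr (α σ : ℝ → ℝ) (t v : ℝ) : ℝ := ∫ u in t..v, (phiR α u v) ^ 2 * (σ u) ^ 2

/-- Smile dispersion factor `ψ_r(t,v)`. -/
noncomputable def psiR (α σ γ : ℝ → ℝ) (t v : ℝ) : ℝ :=
  Real.exp ((1 / 2) * (γ v) ^ 2 * Srr α σ t v)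

/-- Rate–integral covariance `Σ_rz(t,v)`. -/
noncomputable def Srz (α σ γ : ℝ → ℝ) (t v : ℝ) : ℝ :=
  ∫ u in t..v, psiR α σ γ t u * phiR α u v * Srr α σ t u

/-- Variance of the compounding variable `Σ_zz(t,v)`. -/
noncomputable def Szz (α σ γ : ℝ → ℝ) (t v : ℝ) : ℝ :=
  2 * ∫ u in t..v, psiR α σ γ t u * Srz α σ γ t u

/-- `B*(t,v) = ∫_t^v ψ_r(t,u) φ_r(t,u) du`. -/
noncomputable def Bstar (α σ γ : ℝ → ℝ) (t v : ℝ) : ℝ :=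
  ∫ u in t..v, psiR α σ γ t u * phiR α t u

/-- Drift of the compounding variable `μ*(y,t,v)`. -/
noncomputable def muStar (α σ γ : ℝ → ℝ) (y t v : ℝ) : ℝ :=
  Bstar α σ γ t v * (y + Srz α σ γ 0 t) + (1 / 2) * (Bstar α σ γ t v) ^ 2 * Srr α σ 0 t

/-- One-dimensional Gaussian density with mean `m` and variance `s`. -/
noncomputable def gauss (x m s : ℝ) : ℝ :=
  (Real.sqrt (2 * Real.pi * s))⁻¹ * Real.exp (-(x - m) ^ 2 / (2 * s))

/-- Centered bivariate Gaussian density with covariance `!![srr, srz; srz, szz]` at `(a, b)`. -/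
noncomputable def gauss2 (a b srr srz szz : ℝ) : ℝ :=
  (2 * Real.pi * Real.sqrt (srr * szz - srz ^ 2))⁻¹ *
    Real.exp (-(szz * a ^ 2 - 2 * srz * a * b + srr * b ^ 2) / (2 * (srr * szz - srz ^ 2)))

/-- The leading-order (Hull–White) Green's function `G₀`. -/
noncomputable def G0 (α σ γ : ℝ → ℝ) (y z t η ζ v : ℝ) : ℝ :=
  gauss2 (η - phiR α t v * y) (ζ - z - muStar α σ γ y t v)
    (Srr α σ t v) (Srz α σ γ t v) (Szz α σ γ t v)


/-- The smile factor `R⁺(y,t,u)`. -/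
noncomputable def Rplus (α σ γ ystar : ℝ → ℝ) (y t u : ℝ) : ℝ :=
  Real.exp ((1 / 2) * (γ u) ^ 2 * Srr α σ t u + γ u * (phiR α t u * y + ystar u)) / (2 * γ u)

/-- The smile factor `R⁻(y,t,u)`. -/
noncomputable def Rminus (α σ γ ystar : ℝ → ℝ) (y t u : ℝ) : ℝ :=
  Real.exp ((1 / 2) * (γ u) ^ 2 * Srr α σ t u - γ u * (phiR α t u * y + ystar u)) / (2 * γ u)

/-- The argument shift `Δy(t,u)`. -/
noncomputable def dY (α σ γ : ℝ → ℝ) (t u : ℝ) : ℝ := γ u * Srr α σ t u / phiR α t u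

/-- The argument shift `Δz(t,u)`. -/
noncomputable def dZ (α σ γ : ℝ → ℝ) (t u : ℝ) : ℝ :=
  γ u * Srz α σ γ t u - Bstar α σ γ t u * dY α σ γ t u

/-- `∂_z G₀` in the backward variable `z`. -/
noncomputable def dzG0 (α σ γ : ℝ → ℝ) (y z t η ζ v : ℝ) : ℝ :=
  deriv (fun z' => G0 α σ γ y z' t η ζ v) z

/-- `∂_y ∂_z G₀` in the backward variables. -/
noncomputable def dydzG0 (α σ γ : ℝ → ℝ) (y z t η ζ v : ℝ) : ℝ :=
  deriv (fun y' => dzG0 α σ γ y' z t η ζ v) y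

/-- `∂_z² G₀` in the backward variable `z`. -/
noncomputable def dzzG0 (α σ γ : ℝ → ℝ) (y z t η ζ v : ℝ) : ℝ :=
  deriv (fun z' => dzG0 α σ γ y z' t η ζ v) z

/-- The first-order Green's function correction `G₁`. -/
noncomputable def G1 (α σ γ ystar R1star : ℝ → ℝ) (y z t η ζ v : ℝ) : ℝ :=
  (∫ t₁ in t..v,
      (Rplus α σ γ ystar y t t₁ *
          dzG0 α σ γ (y + dY α σ γ t t₁) (z + dZ α σ γ t t₁) t η ζ v
        - Rminus α σ γ ystar y t t₁ *
            dzG0 α σ γ (y - dY α σ γ t t₁) (z - dZ α σ γ t t₁) t η ζ v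
        + R1star t₁ * dzG0 α σ γ y z t η ζ v))
    - muStar α σ γ y t v * dzG0 α σ γ y z t η ζ v
    - (Srz α σ γ t v / phiR α t v) *
        (dydzG0 α σ γ y z t η ζ v - Bstar α σ γ t v * dzzG0 α σ γ y z t η ζ v)
    - Szz α σ γ t v * dzzG0 α σ γ y z t η ζ v


open ProbabilityTheory

lemma phiR_mul_phiR {α : ℝ → ℝ} (hα : Continuous α) (a b c : ℝ) :
    phiR α a b * phiR α b c = phiR α a c := by
  rw [phiR, phiR, phiR, ← Real.exp_add, ← intervalIntegral.integral_add_adjacent_intervals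
    (hα.intervalIntegrable a b) (hα.intervalIntegrable b c), neg_add]

lemma continuous_phiR {α : ℝ → ℝ} (hα : Continuous α) :
    Continuous fun p : ℝ × ℝ => phiR α p.1 p.2 := by
  have hprim : Continuous fun v => ∫ u in (0 : ℝ)..v, α u :=
    intervalIntegral.continuous_primitive (fun a b => hα.intervalIntegrable a b) 0
  have hphi : ∀ p : ℝ × ℝ, phiR α p.1 p.2 =
      Real.exp (-((∫ u in (0 : ℝ)..p.2, α u) - ∫ u in (0 : ℝ)..p.1, α u)) := fun p => by
    rw [phiR, intervalIntegral.integral_interval_sub_left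
      (hα.intervalIntegrable _ _) (hα.intervalIntegrable _ _)]
  simp only [hphi]
  fun_prop

lemma continuous_Srr {α σ : ℝ → ℝ} (hα : Continuous α) (hσ : Continuous σ) (t : ℝ) :
    Continuous fun v => Srr α σ t v := by
  unfold Srr
  refine intervalIntegral.continuous_parametric_intervalIntegral_of_continuous
    (f := fun v u => phiR α u v ^ 2 * σ u ^ 2) ?_ continuous_id
  have := (continuous_phiR hα).comp continuous_swap
  exact (this.pow 2).mul ((hσ.comp continuous_snd).pow 2)

/-- Variance decomposition at an intermediate time. -/
lemma Srr_eq_add {α σ : ℝ → ℝ} (hα : Continuous α) (hσ : Continuous σ) (a b c : ℝ) :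
    Srr α σ a c = phiR α b c ^ 2 * Srr α σ a b + Srr α σ b c := by
  have hcont : Continuous fun u => phiR α u c ^ 2 * σ u ^ 2 :=
    (((continuous_phiR hα).comp (continuous_id.prodMk continuous_const)).pow 2).mul (hσ.pow 2)
  rw [Srr, Srr, Srr, ← intervalIntegral.integral_add_adjacent_intervals
    (hcont.intervalIntegrable a b) (hcont.intervalIntegrable b c),
    ← intervalIntegral.integral_const_mul]
  congr 2
  funext u
  rw [← phiR_mul_phiR hα u b c]
  ring

lemma integral_exp_mul_gaussianReal (m : ℝ) (s : NNReal) (b : ℝ) :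
    ∫ x, Real.exp (b * x) ∂gaussianReal m s = Real.exp (m * b + s * b ^ 2 / 2) :=
  mgf_gaussianReal (X := id) Measure.map_id b

lemma integrable_mul_exp_prod_gaussianReal {A B : ℝ} {a b : ℝ → ℝ}
    (ha : ContinuousOn a (Set.Icc A B)) (hb : ContinuousOn b (Set.Icc A B))
    (m : ℝ) (s : NNReal) :
    Integrable (fun p : ℝ × ℝ => a p.1 * Real.exp (b p.1 * p.2))
      ((volume.restrict (Set.Ioc A B)).prod (gaussianReal m s)) := by
  have hmeas : ∀ {f : ℝ → ℝ}, ContinuousOn f (Set.Icc A B) →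
      AEStronglyMeasurable f (volume.restrict (Set.Ioc A B)) := fun hf =>
    (hf.mono Set.Ioc_subset_Icc_self).aestronglyMeasurable measurableSet_Ioc
  rw [integrable_prod_iff]
  · refine ⟨.of_forall fun u => (integrable_exp_mul_gaussianReal (b u)).const_mul (a u), ?_⟩
    simp only [norm_mul, Real.norm_eq_abs, Real.abs_exp, integral_const_mul,
      integral_exp_mul_gaussianReal]
    have hcont : ContinuousOn (fun u => |a u| * Real.exp (m * b u + s * b u ^ 2 / 2))
        (Set.Icc A B) := by fun_prop
    exact hcont.integrableOn_Icc.mono_set Set.Ioc_subset_Icc_self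
  · exact (hmeas ha).comp_fst.mul (Real.continuous_exp.comp_aestronglyMeasurable
      ((hmeas hb).comp_fst.mul continuous_snd.aestronglyMeasurable))

/-- Averaging a time integral of exponentials against a Gaussian law, by Fubini. -/
lemma integral_const_add_intervalIntegral_gaussianReal {A B : ℝ} (hAB : A ≤ B)
    {p q b r : ℝ → ℝ} (hp : ContinuousOn p (Set.Icc A B)) (hq : ContinuousOn q (Set.Icc A B))
    (hb : ContinuousOn b (Set.Icc A B)) (hr : ContinuousOn r (Set.Icc A B))
    (c m : ℝ) (s : NNReal) :
    ∫ x, (c + ∫ u in A..B, (p u * Real.exp (b u * x) - q u * Real.exp (-b u * x) + r u))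
        ∂gaussianReal m s =
      c + ∫ u in A..B, (p u * Real.exp (m * b u + s * b u ^ 2 / 2)
        - q u * Real.exp (m * -b u + s * (-b u) ^ 2 / 2) + r u) := by
  have hpi := integrable_mul_exp_prod_gaussianReal hp hb m s
  have hqi := integrable_mul_exp_prod_gaussianReal hq hb.neg m s
  have hri : Integrable (fun z : ℝ × ℝ => r z.1)
      ((volume.restrict (Set.Ioc A B)).prod (gaussianReal m s)) :=
    (hr.integrableOn_Icc.mono_set Set.Ioc_subset_Icc_self).integrable.comp_fst _
  have hint : Integrable (fun z : ℝ × ℝ =>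
      p z.1 * Real.exp (b z.1 * z.2) - q z.1 * Real.exp (-b z.1 * z.2) + r z.1)
      ((volume.restrict (Set.Ioc A B)).prod (gaussianReal m s)) := (hpi.sub hqi).add hri
  simp only [intervalIntegral.integral_of_le hAB]
  have hswap := integral_integral_swap
    (f := fun u x => p u * Real.exp (b u * x) - q u * Real.exp (-b u * x) + r u) hint
  rw [integral_add (integrable_const c) hint.integral_prod_right]
  simp only [integral_const, probReal_univ, one_smul]
  congr 1
  refine hswap.symm.trans (integral_congr_ae (.of_forall fun u => ?_))
  have hpu := (integrable_exp_mul_gaussianReal (μ := m) (v := s) (b u)).const_mul (p u)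
  have hqu := (integrable_exp_mul_gaussianReal (μ := m) (v := s) (-b u)).const_mul (q u)
  simp only
  rw [integral_add (by exact hpu.sub hqu) (integrable_const _), integral_sub hpu hqu,
    integral_const_mul, integral_const_mul, integral_exp_mul_gaussianReal,
    integral_exp_mul_gaussianReal]
  simp

lemma integral_mul_gauss (f : ℝ → ℝ) (m : ℝ) {s : ℝ} (hs : 0 < s) :
    ∫ x, f x * gauss x m s = ∫ x, f x ∂gaussianReal m s.toNNReal := by
  rw [integral_gaussianReal_eq_integral_smul (Real.toNNReal_pos.2 hs).ne']
  refine integral_congr_ae (.of_forall fun x => ?_)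
  simp only [smul_eq_mul, mul_comm (f x), gauss, gaussianPDFReal, Real.coe_toNNReal _ hs.le]

theorem sofr_1M_second_stage (α σ γ ystar R1star : ℝ → ℝ)
    (hα : Continuous α) (hσc : Continuous σ) (hγc : Continuous γ)
    (hys : Continuous ystar) (hR1 : Continuous R1star)
    (t T₁ T₂ D y : ℝ) (ht : t ≤ T₁) (h12 : T₁ < T₂)
    (hrr : 0 < Srr α σ t T₁)
    (hγ : ∀ u ∈ Set.Icc T₁ T₂, 0 < γ u) (hD : 0 < D) :
    (∫ η : ℝ,
        (-Real.log D +
            ∫ t₁ in T₁..T₂,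
              (Rplus α σ γ ystar η T₁ t₁ - Rminus α σ γ ystar η T₁ t₁ + R1star t₁)) *
          gauss η (phiR α t T₁ * y) (Srr α σ t T₁))
      = -Real.log D +
          ∫ t₁ in T₁..T₂,
            (psiR α σ γ t t₁ / γ t₁ *
                Real.sinh (γ t₁ * (phiR α t t₁ * y + ystar t₁)) +
              R1star t₁) := by
  rw [integral_mul_gauss _ _ hrr]
  have hS := continuous_Srr hα hσc T₁
  have hφ : Continuous fun u => phiR α T₁ u :=
    (continuous_phiR hα).comp (continuous_const.prodMk continuous_id)
  have hγ2 : ∀ u ∈ Set.Icc T₁ T₂, 2 * γ u ≠ 0 := fun u hu => by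
    have := hγ u hu
    positivity
  have hp : ContinuousOn (fun u => Real.exp ((1 / 2) * γ u ^ 2 * Srr α σ T₁ u + γ u * ystar u)
      / (2 * γ u)) (Set.Icc T₁ T₂) :=
    ContinuousOn.div (by fun_prop) (by fun_prop) hγ2
  have hq : ContinuousOn (fun u => Real.exp ((1 / 2) * γ u ^ 2 * Srr α σ T₁ u - γ u * ystar u)
      / (2 * γ u)) (Set.Icc T₁ T₂) :=
    ContinuousOn.div (by fun_prop) (by fun_prop) hγ2
  have key := integral_const_add_intervalIntegral_gaussianReal h12.le hp hq
    (b := fun u => γ u * phiR α T₁ u) (by fun_prop) hR1.continuousOn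
    (-Real.log D) (phiR α t T₁ * y) (Srr α σ t T₁).toNNReal
  convert key using 1
  · refine integral_congr_ae (.of_forall fun x => ?_)
    simp only [Rplus, Rminus, div_mul_eq_mul_div, ← Real.exp_add]
    congr! 7 <;> ring
  · congr 1
    refine intervalIntegral.integral_congr fun u hu => ?_
    rw [Set.uIcc_of_le h12.le] at hu
    have hγu := hγ u hu
    simp only [psiR, Real.sinh_eq, Real.coe_toNNReal _ hrr.le, Srr_eq_add hα hσc t T₁ u,
      ← phiR_mul_phiR hα t T₁ u, div_mul_eq_mul_div, ← Real.exp_add, mul_div_assoc', mul_sub]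
    field_simp
    ring_nf
end

section
/- Fix t ≤ T₁ < T₂ with Σ_rr(t,T₁) > 0, and let D > 0, y ∈ ℝ. Define V_C(t,T₁,T₂) := B*(T₁,T₂)² Σ_rr(t,T₁) + Σ_zz(T₁,T₂). Then the second valuation stage of the Hull–White (zeroth-order) 3M SOFR futures price satisfies: ∫_ℝ ( exp( μ*(η,T₁,T₂) + (1/2)Σ_zz(T₁,T₂) )/D − 1 ) · N(η; φ_r(t,T₁)·y, Σ_rr(t,T₁)) dη = exp( μ*( φ_r(t,T₁)·y, T₁, T₂ ) + (1/2)V_C(t,T₁,T₂) ) / D − 1. -/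
open MeasureTheory Real

/-- The total variance `V_C(t,T₁,T₂) = B*(T₁,T₂)² Σ_rr(t,T₁) + Σ_zz(T₁,T₂)`. -/
noncomputable def VC (α σ γ : ℝ → ℝ) (t T₁ T₂ : ℝ) : ℝ :=
  (Bstar α σ γ T₁ T₂) ^ 2 * Srr α σ t T₁ + Szz α σ γ T₁ T₂

/-- A Gaussian density of positive variance is integrable. -/
theorem integrable_gauss (m : ℝ) {s : ℝ} (hs : 0 < s) : Integrable fun x ↦ gauss x m s :=
  ProbabilityTheory.integrable_gaussianPDFReal m ⟨s, hs.le⟩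

/-- A Gaussian density of positive variance has total mass one. -/
theorem integral_gauss (m : ℝ) {s : ℝ} (hs : 0 < s) : ∫ x, gauss x m s = 1 := by
  have hv : (⟨s, hs.le⟩ : NNReal) ≠ 0 := fun h ↦ hs.ne' (congrArg NNReal.toReal h)
  exact ProbabilityTheory.integral_gaussianPDFReal_eq_one m hv

/-- Exponential tilting shifts the mean of a Gaussian density. -/
theorem exp_mul_gauss (b x m : ℝ) {s : ℝ} (hs : s ≠ 0) :
    Real.exp (b * x) * gauss x m s =
      Real.exp (b * m + b ^ 2 * s / 2) * gauss x (m + b * s) s := by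
  unfold gauss
  rw [mul_left_comm, ← Real.exp_add, mul_left_comm, ← Real.exp_add]
  congr 2
  field_simp
  ring

theorem sofr_3M_second_stage_HW (α σ γ : ℝ → ℝ)
    (hα : Continuous α) (hσc : Continuous σ) (hγc : Continuous γ)
    (t T₁ T₂ D y : ℝ) (ht : t ≤ T₁) (h12 : T₁ < T₂)
    (hrr : 0 < Srr α σ t T₁) (hD : 0 < D) :
    (∫ η : ℝ,
        (Real.exp (muStar α σ γ η T₁ T₂ + (1 / 2) * Szz α σ γ T₁ T₂) / D - 1) *
          gauss η (phiR α t T₁ * y) (Srr α σ t T₁))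
      = Real.exp (muStar α σ γ (phiR α t T₁ * y) T₁ T₂ + (1 / 2) * VC α σ γ t T₁ T₂) / D
          - 1 := by
  have key : ∀ η : ℝ,
      (Real.exp (muStar α σ γ η T₁ T₂ + (1 / 2) * Szz α σ γ T₁ T₂) / D - 1) *
          gauss η (phiR α t T₁ * y) (Srr α σ t T₁) =
        Real.exp (muStar α σ γ (phiR α t T₁ * y) T₁ T₂ + (1 / 2) * VC α σ γ t T₁ T₂) / D *
            gauss η (phiR α t T₁ * y + Bstar α σ γ T₁ T₂ * Srr α σ t T₁) (Srr α σ t T₁) -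
          gauss η (phiR α t T₁ * y) (Srr α σ t T₁) := by
    intro η
    have tilt := exp_mul_gauss (Bstar α σ γ T₁ T₂) η (phiR α t T₁ * y) hrr.ne'
    have hl : muStar α σ γ η T₁ T₂ + (1 / 2) * Szz α σ γ T₁ T₂ =
        (muStar α σ γ 0 T₁ T₂ + (1 / 2) * Szz α σ γ T₁ T₂) + Bstar α σ γ T₁ T₂ * η := by
      unfold muStar
      ring
    have hr : muStar α σ γ (phiR α t T₁ * y) T₁ T₂ + (1 / 2) * VC α σ γ t T₁ T₂ =
        (muStar α σ γ 0 T₁ T₂ + (1 / 2) * Szz α σ γ T₁ T₂) +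
          (Bstar α σ γ T₁ T₂ * (phiR α t T₁ * y) +
            Bstar α σ γ T₁ T₂ ^ 2 * Srr α σ t T₁ / 2) := by
      unfold muStar VC
      ring
    rw [hl, hr, Real.exp_add, Real.exp_add (muStar α σ γ 0 T₁ T₂ + _)]
    linear_combination
      Real.exp (muStar α σ γ 0 T₁ T₂ + (1 / 2) * Szz α σ γ T₁ T₂) / D * tilt
  simp_rw [key]
  rw [integral_sub ((integrable_gauss _ hrr).const_mul _) (integrable_gauss _ hrr),
    integral_const_mul, integral_gauss _ hrr, integral_gauss _ hrr, mul_one]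
end

section
/- Fix v ∈ ℝ and (η,ζ) ∈ ℝ². Assume σ(u) > 0 for all u. Then for all t < v and all (y,z) ∈ ℝ², the Hull–White futures kernel Ĝ(y,z,t) := N₂( η − φ_r(t,v)·y, ζ − z − B(t,v)·y ; S(t,v) ) is differentiable in t, twice differentiable in y, differentiable in z, and satisfies the backward Kolmogorov equation for the futures pricing problem without discounting: ∂_t Ĝ − α(t)·y·∂_y Ĝ + y·∂_z Ĝ + (1/2)σ(t)²·∂_y² Ĝ = 0. -/
open MeasureTheory Real

/-- The Hull–White (γ ≡ 0) futures Green's function, as a function of the backward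
variables `(y, z, t)` for fixed `(v, η, ζ)`. -/
noncomputable def GhatHW (α σ : ℝ → ℝ) (v η ζ : ℝ) (y z t : ℝ) : ℝ :=
  gauss2 (η - phiR α t v * y) (ζ - z - Bstar α σ (fun _ => 0) t v * y)
    (Srr α σ t v) (Srz α σ (fun _ => 0) t v) (Szz α σ (fun _ => 0) t v)

section Coefficients

variable {α σ : ℝ → ℝ}

lemma phiR_pos (α : ℝ → ℝ) (t v : ℝ) : 0 < phiR α t v := exp_pos _

lemma phiR_self (α : ℝ → ℝ) (v : ℝ) : phiR α v v = 1 := by simp [phiR]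

lemma psiR_zero (α σ : ℝ → ℝ) (t v : ℝ) : psiR α σ (fun _ => 0) t v = 1 := by simp [psiR]

lemma phiR_eq_div (hα : Continuous α) (t v : ℝ) : phiR α t v = phiR α 0 v / phiR α 0 t := by
  rw [phiR, phiR, phiR, ← exp_sub,
    ← intervalIntegral.integral_add_adjacent_intervals (hα.intervalIntegrable 0 t)
      (hα.intervalIntegrable t v)]
  ring_nf

lemma hasDerivAt_phiR_left (hα : Continuous α) (t v : ℝ) :
    HasDerivAt (fun s => phiR α s v) (α t * phiR α t v) t := by
  have h := (intervalIntegral.integral_hasDerivAt_left (hα.intervalIntegrable t v)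
    hα.aestronglyMeasurable.stronglyMeasurableAtFilter hα.continuousAt).neg.exp
  refine h.congr_deriv ?_
  rw [phiR]
  simp only [Pi.neg_apply]
  ring

lemma hasDerivAt_phiR_right (hα : Continuous α) (t v : ℝ) :
    HasDerivAt (fun s => phiR α t s) (-α v * phiR α t v) v := by
  have h := (hα.integral_hasStrictDerivAt t v).hasDerivAt.neg.exp
  refine h.congr_deriv ?_
  rw [phiR]
  simp only [Pi.neg_apply]
  ring

lemma continuous_phiR_right (hα : Continuous α) (t : ℝ) : Continuous fun s => phiR α t s :=
  continuous_iff_continuousAt.2 fun v => (hasDerivAt_phiR_right hα t v).continuousAt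

lemma continuous_phiR_left (hα : Continuous α) (v : ℝ) : Continuous fun s => phiR α s v :=
  continuous_iff_continuousAt.2 fun t => (hasDerivAt_phiR_left hα t v).continuousAt

lemma continuous_sq_div_phiR_sq (hα : Continuous α) (hσ : Continuous σ) :
    Continuous fun u => σ u ^ 2 / phiR α 0 u ^ 2 :=
  (hσ.pow 2).div₀ ((continuous_phiR_right hα 0).pow 2) fun u => (pow_pos (phiR_pos α 0 u) 2).ne'

/-- A continuous function has a differentiable primitive, which computes its integrals. -/
lemma exists_primitive {f : ℝ → ℝ} (hf : Continuous f) :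
    ∃ F : ℝ → ℝ, (∀ u, HasDerivAt F (f u) u) ∧ Continuous F ∧
      ∀ a b, ∫ u in a..b, f u = F b - F a := by
  have hF : ∀ u, HasDerivAt (fun s => ∫ x in (0 : ℝ)..s, f x) (f u) u := fun u =>
    (hf.integral_hasStrictDerivAt 0 u).hasDerivAt
  exact ⟨_, hF, continuous_iff_continuousAt.2 fun u => (hF u).continuousAt, fun a b =>
    intervalIntegral.integral_eq_sub_of_hasDerivAt (fun u _ => hF u) (hf.intervalIntegrable a b)⟩

lemma hasDerivAt_Bstar_zero (hα : Continuous α) (t v : ℝ) :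
    HasDerivAt (fun s => Bstar α σ (fun _ => 0) s v)
      (α t * Bstar α σ (fun _ => 0) t v - 1) t := by
  obtain ⟨P, hP, -, hPint⟩ := exists_primitive (continuous_phiR_right hα 0)
  have hB : ∀ s, Bstar α σ (fun _ => 0) s v = (P v - P s) / phiR α 0 s := fun s => by
    simp only [Bstar, psiR_zero, one_mul, phiR_eq_div hα s, intervalIntegral.integral_div, hPint]
  simp only [hB]
  have hp := (phiR_pos α 0 t).ne'
  refine (((hP t).const_sub (P v)).div (hasDerivAt_phiR_right hα 0 t) hp).congr_deriv ?_
  field_simp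
  ring

/-- The backward derivatives of the covariances are those of the integrals of
`φ_r²σ²`, `φ_r B σ²` and `B²σ²`. -/
lemma hasDerivAt_covariances (hα : Continuous α) (hσ : Continuous σ) (t v : ℝ) :
    HasDerivAt (fun s => Srr α σ s v) (-(σ t ^ 2 * phiR α t v ^ 2)) t ∧
    HasDerivAt (fun s => Srz α σ (fun _ => 0) s v)
      (-(σ t ^ 2 * phiR α t v * Bstar α σ (fun _ => 0) t v)) t ∧
    HasDerivAt (fun s => Szz α σ (fun _ => 0) s v)
      (-(σ t ^ 2 * Bstar α σ (fun _ => 0) t v ^ 2)) t := by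
  have hpc := continuous_phiR_right hα 0
  obtain ⟨P, hP, hPc, hPint⟩ := exists_primitive hpc
  obtain ⟨Q, hQ, hQc, hQint⟩ := exists_primitive (continuous_sq_div_phiR_sq hα hσ)
  obtain ⟨R, hR, hRc, hRint⟩ := exists_primitive (f := fun u => phiR α 0 u * Q u) (hpc.mul hQc)
  obtain ⟨W, hW, -, hWint⟩ := exists_primitive (f := fun u => phiR α 0 u * R u) (hpc.mul hRc)
  have hp : ∀ s, phiR α 0 s ≠ 0 := fun s => (phiR_pos α 0 s).ne'
  have hB : ∀ s, Bstar α σ (fun _ => 0) s v = (P v - P s) / phiR α 0 s := fun s => by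
    simp only [Bstar, psiR_zero, one_mul, phiR_eq_div hα s, intervalIntegral.integral_div, hPint]
  have hrr : ∀ s u, Srr α σ s u = phiR α 0 u ^ 2 * (Q u - Q s) := fun s u => by
    rw [← hQint, ← intervalIntegral.integral_const_mul, Srr]
    refine intervalIntegral.integral_congr fun x _ => ?_
    simp only [phiR_eq_div hα x u]
    ring
  have hrz : ∀ s u, Srz α σ (fun _ => 0) s u =
      phiR α 0 u * (R u - R s - Q s * (P u - P s)) := fun s u => by
    have hint : ∫ x in s..u, (phiR α 0 x * Q x - Q s * phiR α 0 x) =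
        R u - R s - Q s * (P u - P s) := by
      rw [intervalIntegral.integral_sub (Continuous.intervalIntegrable (by fun_prop) _ _)
        (Continuous.intervalIntegrable (by fun_prop) _ _), hRint, intervalIntegral.integral_const_mul,
        hPint]
    rw [← hint, ← intervalIntegral.integral_const_mul, Srz]
    refine intervalIntegral.integral_congr fun x _ => ?_
    have := hp x
    simp only [psiR_zero, phiR_eq_div hα x u, hrr]
    field_simp
  have hzz : ∀ s, Szz α σ (fun _ => 0) s v =
      2 * (W v - W s - R s * (P v - P s) - Q s * ((P v - P s) ^ 2 / 2)) := fun s => by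
    rw [Szz]
    congr 1
    rw [intervalIntegral.integral_eq_sub_of_hasDerivAt (f := fun x =>
      W x - R s * (P x - P s) - Q s * ((P x - P s) ^ 2 / 2))]
    · ring
    · intro x _
      refine (((hW x).sub (((hP x).sub_const (P s)).const_mul (R s))).sub
        (((((hP x).sub_const (P s)).pow 2).div_const 2).const_mul (Q s))).congr_deriv ?_
      simp only [psiR_zero, hrz]
      push_cast
      ring
    · simp only [psiR_zero, hrz]
      exact Continuous.intervalIntegrable (by fun_prop) _ _
  simp only [hrr, hrz, hzz, hB, phiR_eq_div hα t v]
  have hpt := hp t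
  refine ⟨?_, ?_, ?_⟩
  · refine (((hQ t).const_sub (Q v)).const_mul (phiR α 0 v ^ 2)).congr_deriv ?_
    ring
  · refine ((((hR t).const_sub (R v)).sub
      ((hQ t).mul ((hP t).const_sub (P v)))).const_mul (phiR α 0 v)).congr_deriv ?_
    field_simp
    ring
  · refine (((((hW t).const_sub (W v)).sub ((hR t).mul ((hP t).const_sub (P v)))).sub
      ((hQ t).mul ((((hP t).const_sub (P v)).pow 2).div_const 2))).const_mul 2).congr_deriv ?_
    simp
    field_simp
    ring

lemma continuous_Bstar_zero (hα : Continuous α) (v : ℝ) :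
    Continuous fun s => Bstar α σ (fun _ => 0) s v :=
  continuous_iff_continuousAt.2 fun t => (hasDerivAt_Bstar_zero hα t v).continuousAt

lemma Bstar_zero_pos (hα : Continuous α) {t v : ℝ} (htv : t < v) :
    0 < Bstar α σ (fun _ => 0) t v := by
  simp only [Bstar, psiR_zero, one_mul]
  exact intervalIntegral.intervalIntegral_pos_of_pos
    ((continuous_phiR_right hα t).intervalIntegrable _ _) (fun u => phiR_pos α t u) htv

/-- Positivity of the quadratic form of the covariance matrix on vectors `(-k, 1)`. -/
lemma quadraticForm_covariance_pos (hα : Continuous α) (hσc : Continuous σ) (hσ : ∀ u, 0 < σ u)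
    {t v : ℝ} (htv : t < v) (k : ℝ) :
    0 < Szz α σ (fun _ => 0) t v - 2 * k * Srz α σ (fun _ => 0) t v + k ^ 2 * Srr α σ t v := by
  set f : ℝ → ℝ := fun u => σ u ^ 2 * (Bstar α σ (fun _ => 0) u v - k * phiR α u v) ^ 2 with hf
  have hfc : Continuous f :=
    (hσc.pow 2).mul (((continuous_Bstar_zero hα v).sub
      ((continuous_phiR_left hα v).const_mul k)).pow 2)
  have hderiv : ∀ u, HasDerivAt (fun s => -(Szz α σ (fun _ => 0) s v
      - 2 * k * Srz α σ (fun _ => 0) s v + k ^ 2 * Srr α σ s v)) (f u) u := fun u => by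
    obtain ⟨hrr, hrz, hzz⟩ := hasDerivAt_covariances hα hσc u v
    refine (((hzz.sub (hrz.const_mul (2 * k))).add (hrr.const_mul (k ^ 2))).neg).congr_deriv ?_
    simp only [hf]
    ring
  have hint := intervalIntegral.integral_eq_sub_of_hasDerivAt (fun u _ => hderiv u)
    (hfc.intervalIntegrable t v)
  have hpos : 0 < ∫ u in t..v, f u := by
    refine intervalIntegral.integral_pos htv hfc.continuousOn
      (fun u _ => mul_nonneg (sq_nonneg _) (sq_nonneg _)) ?_
    by_cases hk : k = 0
    · refine ⟨t, Set.left_mem_Icc.2 htv.le, ?_⟩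
      have := Bstar_zero_pos (σ := σ) hα htv
      have := hσ t
      simp only [hf, hk, zero_mul, sub_zero]
      positivity
    · refine ⟨v, Set.right_mem_Icc.2 htv.le, ?_⟩
      have := hσ v
      simp only [hf, phiR_self, Bstar, intervalIntegral.integral_same]
      simp only [mul_one, zero_sub, even_two, Even.neg_pow]
      positivity
  have hend : Szz α σ (fun _ => 0) v v = 0 ∧ Srz α σ (fun _ => 0) v v = 0 ∧ Srr α σ v v = 0 := by
    simp [Szz, Srz, Srr]
  rw [hint, hend.1, hend.2.1, hend.2.2] at hpos
  linarith

lemma Srr_pos (hα : Continuous α) (hσc : Continuous σ) (hσ : ∀ u, 0 < σ u) {t v : ℝ}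
    (htv : t < v) : 0 < Srr α σ t v := by
  refine intervalIntegral.intervalIntegral_pos_of_pos
    ((((continuous_phiR_left hα v).pow 2).mul (hσc.pow 2)).intervalIntegrable _ _) (fun u => ?_) htv
  have := hσ u
  have := phiR_pos α u v
  positivity

lemma det_covariance_pos (hα : Continuous α) (hσc : Continuous σ) (hσ : ∀ u, 0 < σ u) {t v : ℝ}
    (htv : t < v) :
    0 < Srr α σ t v * Szz α σ (fun _ => 0) t v - Srz α σ (fun _ => 0) t v ^ 2 := by
  have hrr := Srr_pos hα hσc hσ htv
  have hq := mul_pos hrr (quadraticForm_covariance_pos hα hσc hσ htv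
    (Srz α σ (fun _ => 0) t v / Srr α σ t v))
  refine hq.trans_eq ?_
  field_simp
  ring

end Coefficients

/-- Chain rule for the bivariate Gaussian density along a differentiable curve. -/
lemma HasDerivAt.gauss2 {a b x c w : ℝ → ℝ} {a' b' x' c' w' s : ℝ}
    (ha : HasDerivAt a a' s) (hb : HasDerivAt b b' s) (hx : HasDerivAt x x' s)
    (hc : HasDerivAt c c' s) (hw : HasDerivAt w w' s) (hD : 0 < x s * w s - c s ^ 2) :
    HasDerivAt (fun r => gauss2 (a r) (b r) (x r) (c r) (w r))
      (gauss2 (a s) (b s) (x s) (c s) (w s) *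
        (-(x' * w s + x s * w' - 2 * c s * c') / (2 * (x s * w s - c s ^ 2))
          - (w' * a s ^ 2 + 2 * w s * a s * a' - 2 * (c' * a s * b s + c s * a' * b s
              + c s * a s * b') + x' * b s ^ 2 + 2 * x s * b s * b')
              / (2 * (x s * w s - c s ^ 2))
          + (w s * a s ^ 2 - 2 * c s * a s * b s + x s * b s ^ 2)
              * (x' * w s + x s * w' - 2 * c s * c') / (2 * (x s * w s - c s ^ 2) ^ 2))) s := by
  have hDet := (hx.mul hw).sub (hc.pow 2)
  have hNum := (((hw.mul (ha.pow 2)).sub (((hc.const_mul 2).mul ha).mul hb)).add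
    (hx.mul (hb.pow 2))).neg
  have hsqrt := sqrt_pos.2 hD
  have hsq := sq_sqrt hD.le
  have hpre := ((hDet.sqrt hD.ne').const_mul (2 * π)).inv
    (mul_pos (mul_pos two_pos pi_pos) hsqrt).ne'
  have hexp := (hNum.div (hDet.const_mul 2) (mul_pos two_pos hD).ne').exp
  refine (hpre.mul hexp).congr_deriv ?_
  have hπ := pi_pos.ne'
  simp only [_root_.gauss2, Pi.mul_apply, Pi.sub_apply, Pi.pow_apply, Pi.add_apply, Pi.neg_apply,
    Pi.div_apply, Pi.inv_apply]
  generalize Real.exp _ = E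
  generalize x s * w s - c s ^ 2 = d at *
  generalize √d = r at *
  subst hsq
  have := hsqrt.ne'
  field_simp
  ring

theorem HW_kernel_solves_futures_PDE (α σ : ℝ → ℝ)
    (hα : Continuous α) (hσc : Continuous σ) (hσ : ∀ u, 0 < σ u)
    (v η ζ : ℝ) :
    ∀ t : ℝ, t < v → ∀ y z : ℝ,
      DifferentiableAt ℝ (fun t' => GhatHW α σ v η ζ y z t') t ∧
      DifferentiableAt ℝ (fun y' => GhatHW α σ v η ζ y' z t) y ∧
      DifferentiableAt ℝ (fun y' => deriv (fun y'' => GhatHW α σ v η ζ y'' z t) y') y ∧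
      DifferentiableAt ℝ (fun z' => GhatHW α σ v η ζ y z' t) z ∧
      deriv (fun t' => GhatHW α σ v η ζ y z t') t
          - α t * y * deriv (fun y' => GhatHW α σ v η ζ y' z t) y
          + y * deriv (fun z' => GhatHW α σ v η ζ y z' t) z
          + (1 / 2) * σ t ^ 2 *
              deriv (fun y' => deriv (fun y'' => GhatHW α σ v η ζ y'' z t) y') y
        = 0 := by
  intro t htv y z
  have hD := det_covariance_pos hα hσc hσ htv
  obtain ⟨hrr, hrz, hzz⟩ := hasDerivAt_covariances hα hσc t v
  have hphi := hasDerivAt_phiR_left hα t v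
  have hB := hasDerivAt_Bstar_zero (σ := σ) hα t v
  have ht := HasDerivAt.gauss2 ((hphi.mul_const y).const_sub η)
    ((hB.mul_const y).const_sub (ζ - z)) hrr hrz hzz hD
  have hz := HasDerivAt.gauss2 (hasDerivAt_const z (η - phiR α t v * y))
    (((hasDerivAt_id' z).const_sub ζ).sub_const (Bstar α σ (fun _ => 0) t v * y))
    (hasDerivAt_const z _) (hasDerivAt_const z _) (hasDerivAt_const z _) hD
  have ha : ∀ y', HasDerivAt (fun y' => η - phiR α t v * y') (-(phiR α t v * 1)) y' :=
    fun y' => ((hasDerivAt_id' y').const_mul _).const_sub η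
  have hb : ∀ y', HasDerivAt (fun y' => ζ - z - Bstar α σ (fun _ => 0) t v * y')
      (-(Bstar α σ (fun _ => 0) t v * 1)) y' :=
    fun y' => ((hasDerivAt_id' y').const_mul _).const_sub _
  have hy := fun y' => HasDerivAt.gauss2 (ha y') (hb y')
    (hasDerivAt_const y' _) (hasDerivAt_const y' _) (hasDerivAt_const y' _) hD
  have hy' : ∀ y', HasDerivAt (fun y' => GhatHW α σ v η ζ y' z t)
      (GhatHW α σ v η ζ y' z t *
        ((phiR α t v * (Szz α σ (fun _ => 0) t v * (η - phiR α t v * y')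
            - Srz α σ (fun _ => 0) t v * (ζ - z - Bstar α σ (fun _ => 0) t v * y'))
          + Bstar α σ (fun _ => 0) t v * (Srr α σ t v * (ζ - z - Bstar α σ (fun _ => 0) t v * y')
            - Srz α σ (fun _ => 0) t v * (η - phiR α t v * y')))
          / (Srr α σ t v * Szz α σ (fun _ => 0) t v - Srz α σ (fun _ => 0) t v ^ 2))) y' :=
    fun y' => (hy y').congr_deriv (by
      rw [GhatHW]
      have hD' := hD.ne'
      generalize Srr α σ t v * _ - _ ^ 2 = d at *
      field_simp
      ring)
  have hyd := funext fun y' => (hy' y').deriv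
  have hprod := (hy' y).mul
    (((((((ha y).const_mul (Szz α σ (fun _ => 0) t v)).sub
          ((hb y).const_mul (Srz α σ (fun _ => 0) t v))).const_mul (phiR α t v)).add
        ((((hb y).const_mul (Srr α σ t v)).sub
          ((ha y).const_mul (Srz α σ (fun _ => 0) t v))).const_mul
            (Bstar α σ (fun _ => 0) t v)))).div_const
      (Srr α σ t v * Szz α σ (fun _ => 0) t v - Srz α σ (fun _ => 0) t v ^ 2))
  have hyy : HasDerivAt (fun y' => deriv (fun y'' => GhatHW α σ v η ζ y'' z t) y') _ y :=
    hprod.congr_of_eventuallyEq (.of_eq hyd)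
  refine ⟨ht.differentiableAt, (hy' y).differentiableAt, hyy.differentiableAt,
    hz.differentiableAt, ?_⟩
  rw [hyy.deriv, (hy' y).deriv]
  unfold GhatHW
  rw [ht.deriv, hz.deriv]
  simp only [Pi.add_apply, Pi.sub_apply]
  generalize gauss2 _ _ _ _ _ = g
  have hD' := hD.ne'
  clear * - hD'
  generalize Srr α σ t v = x at *
  generalize Srz α σ _ t v = c at *
  generalize Szz α σ _ t v = w at *
  generalize hd : x * w - c ^ 2 = d at *
  field_simp
  subst hd
  ring
end
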